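/- arXiv:1209.1988 — 4 statements merged into one kernel-verified Lean document; each statement's English description precedes it below -/
import Mathlib

section
/- Let p ∈ ℝ^k have strictly positive entries taking exactly g > 1 distinct values λ_1 > λ_2 > ... > λ_g > 0, the value λ_i occurring with multiplicity m_i (so Σ_{i=1}^g m_i = k), and suppose Σ_{j=1}^k p_j ≤ 1 with π_0 := 1 − Σ_{j=1}^k p_j. Then the spectrum of I(p) = diag(p) − p pᵀ consists of: (i) g simple eigenvalues λ̃_1,...,λ̃_g satisfying the strict interlacing λ_1 > λ̃_1 > λ_2 > λ̃_2 > ... > λ_g > λ̃_g ≥ 0; and (ii) for each i with m_i > 1, the eigenvalue λ_i with multiplicity m_i − 1. Moreover λ̃_g > 0 if and only if π_0 > 0. -/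
open Polynomial

/-!
By the matrix determinant lemma, for `x` different from all `p j`,
`det (x - I(p)) = ∏ j, (x - p j) * (1 + ∑ j, p j ^ 2 / (x - p j))`. Grouping equal entries of `p`,
this is `Q(x) * ∏ i, (x - λ i) ^ (m i - 1)`, where
`Q = ∏ i, (X - λ i) + ∑ i, m i * λ i ^ 2 * ∏ l ≠ i, (X - λ l)` is monic of degree `g`; both sides
are polynomials, so they coincide (`charpoly_eq_secular_mul`).

At `λ i` only one term of `Q` survives and its sign is `(-1) ^ i` (`eval_secular_sign`), while
`Q(0) = (-1) ^ g * (∏ i, λ i) * π₀` (`eval_zero_secular`). The intermediate value theorem then gives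
one root of `Q` between any two consecutive `λ i`, and one in `[0, λ_g)`. These are `g` distinct
roots, hence all of them, and the smallest one vanishes exactly when `Q(0) = 0`, i.e. `π₀ = 0`.
-/

/-- The numerator of the secular function `1 + ∑ i, w i / (x - lam i)` with respect to the common
denominator `∏ i, (x - lam i)`. -/
noncomputable def secular {g : ℕ} (lam w : Fin g → ℝ) : ℝ[X] :=
  Lagrange.nodal Finset.univ lam +
    ∑ i, C (w i) * Lagrange.nodal (Finset.univ.erase i) lam

lemma eval_secular {g : ℕ} (lam w : Fin g → ℝ) {x : ℝ} (hx : ∀ i, x ≠ lam i) :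
    (secular lam w).eval x = (∏ i, (x - lam i)) * (1 + ∑ i, w i / (x - lam i)) := by
  simp only [secular, eval_add, eval_finsetSum, eval_mul, eval_C, Lagrange.eval_nodal]
  rw [mul_add, mul_one, Finset.mul_sum]
  congr 1
  refine Finset.sum_congr rfl fun i _ => ?_
  have hi : x - lam i ≠ 0 := sub_ne_zero.2 (hx i)
  rw [← Finset.mul_prod_erase Finset.univ (fun i => x - lam i) (Finset.mem_univ i)]
  field_simp

lemma eval_secular_node {g : ℕ} (lam w : Fin g → ℝ) (i : Fin g) :
    (secular lam w).eval (lam i) = w i * ∏ l ∈ Finset.univ.erase i, (lam i - lam l) := by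
  simp only [secular, eval_add, eval_finsetSum, eval_mul, eval_C]
  rw [Lagrange.eval_nodal_at_node (Finset.mem_univ i), zero_add,
    Finset.sum_eq_single i, Lagrange.eval_nodal]
  · intro b _ hb
    rw [Lagrange.eval_nodal_at_node (Finset.mem_erase.2 ⟨hb.symm, Finset.mem_univ i⟩), mul_zero]
  · simp

/-- Exactly the `i` factors `lam i - lam l` with `l < i` are negative. -/
lemma eval_secular_sign {g : ℕ} {lam w : Fin g → ℝ} (hlam : StrictAnti lam) (hw : ∀ i, 0 < w i)
    (i : Fin g) : 0 < (-1) ^ (i : ℕ) * (secular lam w).eval (lam i) := by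
  have h1 : ((-1 : ℝ)) ^ (i : ℕ) = ∏ l ∈ Finset.univ.erase i, if l < i then (-1 : ℝ) else 1 := by
    have : (Finset.univ.erase i).filter (· < i) = Finset.Iio i := by
      ext l
      simp only [Finset.mem_filter, Finset.mem_erase, Finset.mem_univ, Finset.mem_Iio]
      exact ⟨fun h => h.2, fun h => ⟨⟨h.ne, trivial⟩, h⟩⟩
    rw [Finset.prod_ite, Finset.prod_const, Finset.prod_const_one, mul_one, this, Fin.card_Iio]
  rw [eval_secular_node, mul_left_comm, h1, ← Finset.prod_mul_distrib]
  refine mul_pos (hw i) (Finset.prod_pos fun l hl => ?_)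
  split_ifs with h
  · linarith [hlam h]
  · have : i < l := lt_of_le_of_ne (not_lt.1 h) (Finset.ne_of_mem_erase hl).symm
    linarith [hlam this]

lemma eval_zero_secular {g : ℕ} {lam : Fin g → ℝ} (m : Fin g → ℕ) (hpos : ∀ i, 0 < lam i) :
    (secular lam fun i => m i * lam i ^ 2).eval 0
      = (-1) ^ g * (∏ i, lam i) * (1 - ∑ i, m i * lam i) := by
  rw [eval_secular _ _ fun i => (hpos i).ne]
  have h1 : ∏ i, (0 - lam i) = (-1) ^ g * ∏ i, lam i := by
    simp [Finset.prod_neg]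
  rw [h1, sub_eq_add_neg, ← Finset.sum_neg_distrib]
  congr 2
  refine Finset.sum_congr rfl fun i _ => ?_
  have := (hpos i).ne'
  field_simp
  ring

/-- The secular polynomial is monic of degree `g`, so `g` distinct roots determine it. -/
lemma secular_eq_prod {g : ℕ} {lam w lt : Fin g → ℝ} (hinj : Function.Injective lt)
    (hroot : ∀ i, (secular lam w).eval (lt i) = 0) :
    secular lam w = ∏ i, (X - C (lt i)) := by
  change _ = Lagrange.nodal Finset.univ lt
  refine Polynomial.eq_of_degree_sub_lt_of_eval_index_eq (s := Finset.univ) (v := lt)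
    hinj.injOn ?_ fun i _ => ?_
  · rw [secular, add_sub_right_comm]
    refine (degree_add_le _ _).trans_lt (max_lt ?_ ?_)
    · refine (degree_sub_lt_left ?_ Lagrange.nodal_ne_zero ?_).trans_le Lagrange.degree_nodal.le
      · rw [Lagrange.degree_nodal, Lagrange.degree_nodal]
      · rw [Lagrange.nodal_monic.leadingCoeff, Lagrange.nodal_monic.leadingCoeff]
    · refine (degree_sum_le _ _).trans_lt
        ((Finset.sup_lt_iff (WithBot.bot_lt_coe _)).2 fun i hi => ?_)
      rw [← smul_eq_C_mul]
      refine (degree_smul_le _ _).trans_lt ?_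
      rw [Lagrange.degree_nodal]
      exact_mod_cast Finset.card_erase_lt_of_mem hi
  · rw [hroot, Lagrange.eval_nodal_at_node (Finset.mem_univ i)]

/-- The matrix determinant lemma for `x - I(p)`, away from the entries of `p`. -/
lemma eval_charpoly_fisher {k : ℕ} (p : Fin k → ℝ) {x : ℝ} (hx : ∀ j, x ≠ p j) :
    (Matrix.diagonal p - Matrix.of fun i j => p i * p j).charpoly.eval x
      = (∏ j, (x - p j)) * (1 + ∑ j, p j ^ 2 / (x - p j)) := by
  have hne : ∀ j, x - p j ≠ 0 := fun j => sub_ne_zero.2 (hx j)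
  have hM : Matrix.scalar (Fin k) x - (Matrix.diagonal p - Matrix.of fun i j => p i * p j)
      = Matrix.diagonal (fun j => x - p j) *
        (1 + Matrix.replicateCol Unit (fun j => p j / (x - p j)) * Matrix.replicateRow Unit p) := by
    ext i j
    rw [Matrix.diagonal_mul]
    simp only [Matrix.sub_apply, Matrix.add_apply, Matrix.scalar_apply, Matrix.of_apply,
      Matrix.mul_apply, Matrix.replicateCol_apply, Matrix.replicateRow_apply,
      Finset.univ_unique, Finset.sum_singleton]
    have hi := hne i
    by_cases h : i = j
    · subst h
      simp only [Matrix.diagonal_apply_eq, Matrix.one_apply_eq]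
      field_simp
      ring
    · simp only [Matrix.diagonal_apply_ne _ h, Matrix.one_apply_ne h]
      field_simp
      ring
  rw [Matrix.eval_charpoly, hM, Matrix.det_mul, Matrix.det_diagonal,
    Matrix.det_one_add_replicateCol_mul_replicateRow]
  congr 2
  refine Finset.sum_congr rfl fun j _ => ?_
  ring

section Grouping

variable {k g : ℕ} {p : Fin k → ℝ} {lam : Fin g → ℝ} {m : Fin g → ℕ}

lemma prod_group (hinj : Function.Injective lam) (hval : ∀ j, ∃ i, p j = lam i)
    (hmult : ∀ i, (Finset.univ.filter fun j => p j = lam i).card = m i) (f : ℝ → ℝ) :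
    ∏ j, f (p j) = ∏ i, f (lam i) ^ m i := by
  choose s hs using hval
  simp only [hs, hinj.eq_iff] at hmult ⊢
  rw [← Finset.prod_fiberwise' Finset.univ s fun i => f (lam i)]
  simp only [Finset.prod_const, hmult]

lemma sum_group (hinj : Function.Injective lam) (hval : ∀ j, ∃ i, p j = lam i)
    (hmult : ∀ i, (Finset.univ.filter fun j => p j = lam i).card = m i) (f : ℝ → ℝ) :
    ∑ j, f (p j) = ∑ i, m i * f (lam i) := by
  choose s hs using hval
  simp only [hs, hinj.eq_iff] at hmult ⊢
  rw [← Finset.sum_fiberwise' Finset.univ s fun i => f (lam i)]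
  simp only [Finset.sum_const, hmult, nsmul_eq_mul]

lemma charpoly_eq_secular_mul (hinj : Function.Injective lam) (hval : ∀ j, ∃ i, p j = lam i)
    (hmult : ∀ i, (Finset.univ.filter fun j => p j = lam i).card = m i) (hm : ∀ i, 0 < m i) :
    (Matrix.diagonal p - Matrix.of fun i j => p i * p j).charpoly
      = secular lam (fun i => m i * lam i ^ 2) * ∏ i, (X - C (lam i)) ^ (m i - 1) := by
  refine Polynomial.eq_of_infinite_eval_eq _ _
    ((Set.finite_range lam).infinite_compl.mono fun x hx => ?_)
  have hx' : ∀ i, x ≠ lam i := fun i h => hx ⟨i, h.symm⟩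
  have hxp : ∀ j, x ≠ p j := fun j => by
    obtain ⟨i, hi⟩ := hval j
    exact hi ▸ hx' i
  change eval x _ = eval x _
  rw [eval_charpoly_fisher p hxp, eval_mul, eval_secular _ _ hx', eval_prod,
    prod_group hinj hval hmult (fun t => x - t),
    sum_group hinj hval hmult (fun t => t ^ 2 / (x - t)), mul_right_comm]
  simp only [eval_pow, eval_sub, eval_X, eval_C, ← Finset.prod_mul_distrib, mul_div_assoc]
  congr 1
  refine Finset.prod_congr rfl fun i _ => ?_
  rw [← pow_succ', Nat.sub_add_cancel (hm i)]

end Grouping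

/-- A root of the secular polynomial below each `lam i`, by the intermediate value theorem. The
lower end of the interval is the next node, or `0` when `i` is the last index. -/
lemma exists_root {g : ℕ} {lam : Fin g → ℝ} {m : Fin g → ℕ} (hpos : ∀ i, 0 < lam i)
    (hlam : StrictAnti lam) (hm : ∀ i, 0 < m i) (hsum : ∑ i, m i * lam i ≤ 1) (i : Fin g) :
    ∃ x, (secular lam fun i => m i * lam i ^ 2).eval x = 0 ∧ x < lam i ∧ 0 ≤ x ∧
      ∀ h : (i : ℕ) + 1 < g, lam ⟨(i : ℕ) + 1, h⟩ < x := by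
  set Q := secular lam fun i => m i * lam i ^ 2 with hQ
  have hsign : ∀ i : Fin g, 0 < (-1) ^ (i : ℕ) * Q.eval (lam i) :=
    eval_secular_sign hlam fun i => mul_pos (Nat.cast_pos.2 (hm i)) (pow_pos (hpos i) 2)
  have hnode : ∀ i : Fin g, Q.eval (lam i) ≠ 0 := fun i h => by
    have := hsign i
    simp [h] at this
  have key : ∀ a, a ≤ lam i → (-1) ^ (i : ℕ) * Q.eval a ≤ 0 →
      ∃ x, Q.eval x = 0 ∧ a ≤ x ∧ x < lam i := fun a ha hQa => by
    obtain ⟨x, hx, hx0⟩ := intermediate_value_Icc ha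
      (f := fun x => (-1) ^ (i : ℕ) * Q.eval x) (by fun_prop) ⟨hQa, (hsign i).le⟩
    have hx0 : Q.eval x = 0 := by simpa using hx0
    exact ⟨x, hx0, hx.1, lt_of_le_of_ne hx.2 fun h => hnode i (h ▸ hx0)⟩
  by_cases h : (i : ℕ) + 1 < g
  · have hlt : lam ⟨(i : ℕ) + 1, h⟩ < lam i := hlam (Fin.lt_def.2 (Nat.lt_succ_self _))
    obtain ⟨x, hx0, hax, hxi⟩ := key _ hlt.le (by
      have := hsign ⟨(i : ℕ) + 1, h⟩
      simp only [pow_succ] at this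
      linarith)
    exact ⟨x, hx0, hxi, (hpos _).le.trans hax, fun _ =>
      lt_of_le_of_ne hax fun h' => hnode _ (h' ▸ hx0)⟩
  · have hi : g = (i : ℕ) + 1 := by omega
    obtain ⟨x, hx0, hax, hxi⟩ := key 0 (hpos i).le (by
      have hs : ((-1 : ℝ)) ^ (i : ℕ) * (-1) ^ g = -1 := by
        rw [← pow_add]
        exact Odd.neg_one_pow ⟨i, by omega⟩
      have hP : 0 < ∏ i, lam i := Finset.prod_pos fun i _ => hpos i
      rw [hQ, eval_zero_secular m hpos, ← mul_assoc, ← mul_assoc, hs]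
      nlinarith)
    exact ⟨x, hx0, hxi, hax, fun h' => absurd h' h⟩

/-- Case 4 (generic case) of the spectral decomposition of the Fisher information
`I(p) = diag(p) - p pᵀ`, where the entries of `p` take exactly `g > 1` distinct positive
values `λ₁ > ⋯ > λ_g`, `λᵢ` with multiplicity `mᵢ`: the spectrum consists of `g` simple
eigenvalues `λ̃ᵢ` strictly interlacing (`λ₁ > λ̃₁ > λ₂ > ⋯ > λ_g > λ̃_g ≥ 0`) together,
for each `i` with `mᵢ > 1`, with `λᵢ` of multiplicity `mᵢ - 1` (expressed via the
characteristic polynomial); moreover `λ̃_g > 0` iff `π₀ = 1 - Σⱼ pⱼ > 0`. -/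
theorem stmt4 (k g : ℕ) (hg : 1 < g) (p : Fin k → ℝ) (lam : Fin g → ℝ) (m : Fin g → ℕ)
    (hlam_pos : ∀ i, 0 < lam i) (hlam_anti : StrictAnti lam)
    (hval : ∀ j, ∃ i, p j = lam i)
    (hmult : ∀ i, (Finset.univ.filter fun j => p j = lam i).card = m i)
    (hm : ∀ i, 0 < m i) (hk : ∑ i, m i = k)
    (hsum : ∑ j, p j ≤ 1) :
    ∃ lt : Fin g → ℝ,
      (∀ i, lt i < lam i) ∧
      (∀ (i : Fin g) (h : (i : ℕ) + 1 < g), lam ⟨(i : ℕ) + 1, h⟩ < lt i) ∧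
      0 ≤ lt ⟨g - 1, by omega⟩ ∧
      (Matrix.diagonal p - Matrix.of fun i j => p i * p j).charpoly
        = (∏ i, (X - C (lt i))) * ∏ i, (X - C (lam i)) ^ (m i - 1) ∧
      (0 < lt ⟨g - 1, by omega⟩ ↔ 0 < 1 - ∑ j, p j) := by
  have hS : ∑ j, p j = ∑ i, m i * lam i :=
    sum_group hlam_anti.injective hval hmult fun t => t
  rw [hS] at hsum ⊢
  choose lt hroot hlt hnn hgt using exists_root hlam_pos hlam_anti hm hsum
  have hanti : StrictAnti lt := fun i j hij => by
    have h : (i : ℕ) + 1 < g := by omega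
    exact ((hlt j).trans_le (hlam_anti.antitone (a := ⟨(i : ℕ) + 1, h⟩) (Fin.le_def.2 hij))).trans
      (hgt i h)
  have hQ := secular_eq_prod hanti.injective hroot
  have h0 := eval_zero_secular m hlam_pos
  refine ⟨lt, hlt, hgt, hnn _, ?_, fun h => ?_, fun h => ?_⟩
  · rw [charpoly_eq_secular_mul hlam_anti.injective hval hmult hm, hQ]
  · refine lt_of_le_of_ne (sub_nonneg.2 hsum) fun hz => ?_
    -- If `π₀ = 0` then `0` is a root of the secular polynomial, but all of its roots are positive.
    rw [← hz, mul_zero, hQ, eval_prod, Finset.prod_eq_zero_iff] at h0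
    obtain ⟨i, -, hi⟩ := h0
    have hle : lt ⟨g - 1, by omega⟩ ≤ lt i :=
      hanti.antitone (Fin.le_def.2 (Nat.le_sub_one_of_lt i.2))
    simp only [eval_sub, eval_X, eval_C] at hi
    linarith
  · refine lt_of_le_of_ne (hnn _) fun hz => ?_
    have hr := hroot ⟨g - 1, by omega⟩
    rw [← hz, h0] at hr
    have hP : 0 < ∏ i, lam i := Finset.prod_pos fun i _ => hlam_pos i
    exact mul_ne_zero (mul_ne_zero (pow_ne_zero _ (by norm_num)) hP.ne') h.ne' hr
end

section
/- Let p ∈ ℝ^k be arranged in blocks p = (λ_1 1_{m_1}ᵀ | ... | λ_g 1_{m_g}ᵀ)ᵀ with λ_1 > ... > λ_g > 0 and Σ m_i = k. Suppose μ ∉ {λ_1,...,λ_g} satisfies h(μ) = 0, where h(x) = 1 + Σ_{i=1}^g m_i λ_i² / (x − λ_i). Then the vector v ∈ ℝ^k with block structure v = ( (λ_1/(μ−λ_1)) 1_{m_1}ᵀ | ... | (λ_g/(μ−λ_g)) 1_{m_g}ᵀ )ᵀ is an eigenvector of diag(p) − p pᵀ with eigenvalue μ: (diag(p) − p pᵀ)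 v = μ v. -/
/-!
Grouping the coordinates by block, `∑ⱼ pⱼ vⱼ = ∑ᵢ mᵢ λᵢ² / (μ - λᵢ)`, which is `-1` because
`h(μ) = 0`. Hence `(I(p) v)ⱼ = pⱼ vⱼ - pⱼ ∑ₗ pₗ vₗ = pⱼ vⱼ + pⱼ`, and this equals `μ vⱼ` by
`(μ - pⱼ) vⱼ = pⱼ`.
-/

/-- Eigenvectors of the Fisher information `I(p) = diag(p) - p pᵀ` for a blocked
probability vector `p = (λ₁1ᵀ_{m₁} | ⋯ | λ_g 1ᵀ_{m_g})ᵀ`: if `μ ∉ {λ₁,…,λ_g}`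
satisfies `h(μ) = 1 + Σᵢ mᵢ λᵢ²/(μ - λᵢ) = 0`, then the blocked vector
`v = ((λ₁/(μ-λ₁))1ᵀ_{m₁} | ⋯ )ᵀ`, i.e. `vⱼ = pⱼ/(μ - pⱼ)`, satisfies `I(p) v = μ v`. -/
theorem stmt6 (k g : ℕ) (p : Fin k → ℝ) (lam : Fin g → ℝ) (m : Fin g → ℕ)
    (hlam_pos : ∀ i, 0 < lam i) (hlam_anti : StrictAnti lam)
    (hval : ∀ j, ∃ i, p j = lam i)
    (hmult : ∀ i, (Finset.univ.filter fun j => p j = lam i).card = m i)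
    (mu : ℝ) (hmu : ∀ i, mu ≠ lam i)
    (hroot : 1 + ∑ i, (m i : ℝ) * (lam i) ^ 2 / (mu - lam i) = 0)
    (v : Fin k → ℝ) (hv : ∀ j, v j = p j / (mu - p j)) :
    (Matrix.diagonal p - Matrix.of fun i j => p i * p j).mulVec v = mu • v := by
  choose c hc using hval
  have hinj : Function.Injective lam := hlam_anti.injective
  have hdot : ∑ j, p j * v j = -1 := by
    have hfib : ∑ j, p j * v j = ∑ i, (m i : ℝ) * (lam i) ^ 2 / (mu - lam i) := by
      rw [← Finset.sum_fiberwise Finset.univ c]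
      refine Finset.sum_congr rfl fun i _ => ?_
      have hset : (Finset.univ.filter fun j => c j = i)
          = Finset.univ.filter fun j => p j = lam i := by
        ext j
        simp [hc, hinj.eq_iff]
      have hconst : ∀ j ∈ Finset.univ.filter fun j => p j = lam i,
          p j * v j = (lam i) ^ 2 / (mu - lam i) := by
        intro j hj
        rw [hv, (Finset.mem_filter.mp hj).2]
        ring
      rw [hset, Finset.sum_congr rfl hconst, Finset.sum_const, hmult, nsmul_eq_mul]
      ring
    linarith
  ext j
  have hne : mu - p j ≠ 0 := sub_ne_zero.mpr (by rw [hc]; exact hmu _)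
  have hvj : (mu - p j) * v j = p j := by
    rw [hv]
    field_simp
  have hrank : (Matrix.of fun i j => p i * p j).mulVec v j = p j * ∑ l, p l * v l := by
    simp [Matrix.mulVec, dotProduct, Finset.mul_sum, mul_assoc]
  rw [Matrix.sub_mulVec, Pi.sub_apply, Matrix.mulVec_diagonal, hrank, hdot, Pi.smul_apply,
    smul_eq_mul]
  linarith
end

section
/- Let f(x;θ) = ν(x) exp{ θᵀ s(x) − ψ(θ) } be a regular exponential family and {B_κ}_{κ=0}^{K} a finite measurable partition such that ‖s(x) − s(y)‖ ≤ ε for all x, y in the same cell. Let x_1,...,x_N be data with bin counts n_κ. Suppose θ̂_c is an interior maximiser of the continuous likelihood, so that ∇ψ(θ̂_c) = N^{-1} Σ_{i=1}^N s(x_i), and θ̂_d is an interior maximiser of the discretised likelihood, so that ∇ψ(θ̂_d) = N^{-1} Σ_{κ=0}^{K} n_κ E_{θ̂_d}( s(X) | X ∈ B_κ ). Then ‖ ∇ψ(θ̂_d) − ∇ψ(θ̂_c) ‖ ≤ ε. -/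
/-! Each conditional mean `E(s(X) | X ∈ B)` is a weighted average of values of `s` on `B`, so it lies
within `ε` of every single value `s x₀` with `x₀ ∈ B` (`norm_cell_mean_sub_le`). Rewriting the sum
over cells weighted by the counts as a sum over data points, the difference of the two gradients is
the average over `i` of `E(s(X) | X ∈ B_{κ(i)}) - s (x i)`, whose terms all have norm at most `ε`. -/

open MeasureTheory

/-- The `f`-weighted mean of `s` over a cell on which `s` oscillates by at most `ε` is within `ε`
of the value of `s` at any point of the cell. -/
lemma norm_cell_mean_sub_le {X E : Type*} [MeasurableSpace X] [NormedAddCommGroup E]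
    [NormedSpace ℝ E] [CompleteSpace E] {μ : Measure X} {f : X → ℝ} {s : X → E} {B : Set X}
    {ε : ℝ} (hf0 : ∀ x, 0 ≤ f x) (hf : IntegrableOn f B μ)
    (hfs : IntegrableOn (fun x => f x • s x) B μ) (hB : MeasurableSet B)
    (hpos : 0 < ∫ y in B, f y ∂μ) {x₀ : X} (hosc : ∀ y ∈ B, ‖s y - s x₀‖ ≤ ε) :
    ‖(∫ y in B, f y ∂μ)⁻¹ • (∫ y in B, f y • s y ∂μ) - s x₀‖ ≤ ε := by
  set p := ∫ y in B, f y ∂μ with hp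
  have hsub : ∫ y in B, f y • (s y - s x₀) ∂μ = (∫ y in B, f y • s y ∂μ) - p • s x₀ := by
    simp only [smul_sub]
    rw [integral_sub hfs (hf.smul_const _), integral_smul_const]
  have hbound : ‖∫ y in B, f y • (s y - s x₀) ∂μ‖ ≤ p * ε := by
    rw [hp, ← integral_mul_const]
    refine norm_integral_le_of_norm_le (hf.mul_const ε) ?_
    filter_upwards [ae_restrict_mem hB] with y hy
    rw [norm_smul, Real.norm_of_nonneg (hf0 y)]
    exact mul_le_mul_of_nonneg_left (hosc y hy) (hf0 y)
  have heq : p⁻¹ • (∫ y in B, f y • s y ∂μ) - s x₀ =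
      p⁻¹ • ∫ y in B, f y • (s y - s x₀) ∂μ := by
    rw [hsub, smul_sub, inv_smul_smul₀ hpos.ne']
  rw [heq, norm_smul, norm_inv, Real.norm_of_nonneg hpos.le, inv_mul_le_iff₀ hpos]
  exact hbound

/-- Corollary 4.3 (key step): if the sufficient statistic `s` oscillates by at most `ε`
on each cell of the partition, `θ̂_c` solves the continuous score equation
`∇ψ(θ̂_c) = N⁻¹ Σᵢ s(xᵢ)` and `θ̂_d` solves the discretised score equation
`∇ψ(θ̂_d) = N⁻¹ Σ_κ n_κ E_{θ̂_d}(s(X) | X ∈ B_κ)` (with `f` the density of `f(·;θ̂_d)`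
w.r.t. `μ`), then `‖∇ψ(θ̂_d) - ∇ψ(θ̂_c)‖ ≤ ε`. -/
theorem stmt14 {X : Type*} [MeasurableSpace X] (μ : Measure X)
    (m K N : ℕ) (hN : 0 < N) (s : X → Fin m → ℝ)
    (f : X → ℝ) (hf0 : ∀ x, 0 ≤ f x) (hprob : ∫ x, f x ∂μ = 1)
    (hint : Integrable (fun x => f x • s x) μ)
    (B : Fin (K + 1) → Set X) (hmeas : ∀ κ, MeasurableSet (B κ))
    (hdisj : Pairwise fun κ κ' => Disjoint (B κ) (B κ'))
    (hcover : (⋃ κ, B κ) = Set.univ)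
    (ε : ℝ) (hosc : ∀ κ, ∀ x ∈ B κ, ∀ y ∈ B κ, ‖s x - s y‖ ≤ ε)
    (x : Fin N → X) (κof : Fin N → Fin (K + 1)) (hκof : ∀ i, x i ∈ B (κof i))
    (n : Fin (K + 1) → ℕ)
    (hn : ∀ κ, n κ = (Finset.univ.filter fun i => κof i = κ).card)
    (π : Fin (K + 1) → ℝ) (hπ : ∀ κ, π κ = ∫ y in B κ, f y ∂μ) (hπpos : ∀ κ, 0 < π κ)
    (gradc gradd : Fin m → ℝ)
    (hgradc : gradc = (N : ℝ)⁻¹ • ∑ i, s (x i))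
    (hgradd : gradd =
      (N : ℝ)⁻¹ • ∑ κ, (n κ : ℝ) • ((π κ)⁻¹ • ∫ y in B κ, f y • s y ∂μ)) :
    ‖gradd - gradc‖ ≤ ε := by
  -- a nonzero Bochner integral forces integrability
  have hf : Integrable f μ := by
    by_contra h
    rw [integral_undef h] at hprob
    exact zero_ne_one hprob
  set c : Fin (K + 1) → Fin m → ℝ := fun κ => (π κ)⁻¹ • ∫ y in B κ, f y • s y ∂μ with hc
  have hterm : ∀ i, ‖c (κof i) - s (x i)‖ ≤ ε := by
    intro i
    have hpos := hπpos (κof i)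
    simp only [hc]
    rw [hπ] at hpos ⊢
    exact norm_cell_mean_sub_le hf0 hf.integrableOn hint.integrableOn (hmeas _) hpos
      fun y hy => hosc _ y hy _ (hκof i)
  have hsum : ∑ κ, (n κ : ℝ) • c κ = ∑ i, c (κof i) := by
    rw [← Finset.sum_fiberwise Finset.univ κof]
    refine Finset.sum_congr rfl fun κ _ => ?_
    rw [Finset.sum_congr rfl fun i hi => by rw [(Finset.mem_filter.mp hi).2], Finset.sum_const,
      hn κ, Nat.cast_smul_eq_nsmul]
  have hNpos : (0 : ℝ) < N := Nat.cast_pos.mpr hN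
  have hdiff : gradd - gradc = (N : ℝ)⁻¹ • ∑ i, (c (κof i) - s (x i)) := by
    rw [hgradd, hgradc, hsum, ← smul_sub, Finset.sum_sub_distrib]
  rw [hdiff, norm_smul, norm_inv, Real.norm_of_nonneg hNpos.le, inv_mul_le_iff₀ hNpos]
  simpa using norm_sum_le_of_le Finset.univ fun i _ => hterm i
end

section
/- Let s_0 < s_1 < ... < s_k and θ_0 < θ_1 < ... < θ_k be real numbers. Then the (k+1)×(k+1) matrix B* with entries B*_{ij} = exp( s_i θ_j ) has strictly positive determinant: det B* > 0. -/
/-!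
A nontrivial exponential sum `∑ c_j exp(t θ_j)` with `n` distinct frequencies has fewer than `n`
real zeros (`expSum_coeff_eq_zero`): dividing by one of the exponentials and differentiating
removes one term, and Rolle's theorem loses at most one zero. Hence the determinant never vanishes
(`det_exp_ne_zero`).

Positivity is by induction on the size (`det_exp_pos`). Replace the last node `s_n` by a variable
`t`; expanding along the last row, the determinant becomes an exponential sum `D t` whose
coefficient at the largest frequency is the minor of smaller size, positive by induction. So
`D t > 0` for large `t`, and since `D` is continuous without zeros on `[s_n, ∞)`, `D s_n > 0`.
-/

/-- An exponential sum with `n` distinct frequencies and `n` distinct zeros is trivial. -/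
theorem expSum_coeff_eq_zero : ∀ (n : ℕ) (c s θ : Fin n → ℝ), StrictMono s →
    Function.Injective θ → (∀ i, ∑ j, c j * Real.exp (s i * θ j) = 0) → ∀ j, c j = 0
  | 0, _, _, _, _, _, _, j => j.elim0
  | n + 1, c, s, θ, hs, hθ, h, j => by
    let g : ℝ → ℝ := fun t => ∑ j, c j * Real.exp (t * (θ j - θ 0))
    have hg : ∀ t, HasDerivAt g
        (∑ j, c j * (Real.exp (t * (θ j - θ 0)) * (θ j - θ 0))) t := by
      intro t
      refine HasDerivAt.fun_sum fun j _ => HasDerivAt.const_mul _ ?_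
      simpa using ((hasDerivAt_id t).mul_const (θ j - θ 0)).exp
    have hg0 : ∀ i, g (s i) = 0 := by
      intro i
      have : g (s i) = (∑ j, c j * Real.exp (s i * θ j)) * Real.exp (-(s i * θ 0)) := by
        rw [Finset.sum_mul]
        refine Finset.sum_congr rfl fun j _ => ?_
        rw [mul_assoc, ← Real.exp_add]
        ring_nf
      rw [this, h i, zero_mul]
    have hR : ∀ i : Fin n, ∃ t ∈ Set.Ioo (s i.castSucc) (s i.succ),
        ∑ j, c j * (Real.exp (t * (θ j - θ 0)) * (θ j - θ 0)) = 0 := fun i =>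
      exists_hasDerivAt_eq_zero (hs i.castSucc_lt_succ)
        (fun t _ => (hg t).continuousAt.continuousWithinAt) (by rw [hg0, hg0]) fun t _ => hg t
    choose r hr hr0 using hR
    have hrs : StrictMono r := by
      intro a b hab
      refine (hr a).2.trans_le (le_trans (hs.monotone ?_) (hr b).1.le)
      exact Fin.succ_le_castSucc_iff.2 hab
    have hc : ∀ j : Fin n, c j.succ = 0 := by
      intro j
      have := expSum_coeff_eq_zero n (fun j => c j.succ * (θ j.succ - θ 0)) r
        (fun j => θ j.succ - θ 0) hrs
        (fun a b hab => Fin.succ_injective _ (hθ (sub_left_injective hab))) (fun i => by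
          rw [← hr0 i, Fin.sum_univ_succ]
          simp only [sub_self, mul_zero, zero_add]
          exact Finset.sum_congr rfl fun j _ => by ring) j
      exact (mul_eq_zero.1 this).resolve_right
        (sub_ne_zero.2 fun e => Fin.succ_ne_zero j (hθ e))
    have h0 := h 0
    rw [Fin.sum_univ_succ] at h0
    simp only [hc, zero_mul, Finset.sum_const_zero, add_zero] at h0
    refine Fin.cases ?_ hc j
    exact (mul_eq_zero.1 h0).resolve_right (Real.exp_pos _).ne'

theorem det_exp_ne_zero {n : ℕ} {s θ : Fin n → ℝ} (hs : StrictMono s) (hθ : StrictMono θ) :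
    (Matrix.of fun i j => Real.exp (s i * θ j)).det ≠ 0 := by
  intro h
  obtain ⟨v, hv, hv0⟩ := Matrix.exists_mulVec_eq_zero_iff.2 h
  refine hv (funext (expSum_coeff_eq_zero n v s θ hs hθ.injective fun i => ?_))
  have := congrFun hv0 i
  simpa [Matrix.mulVec, dotProduct, mul_comm (v _)] using this

open Filter Topology in
/-- If the coefficient at the strictly largest frequency is positive, then the exponential sum is
eventually positive. -/
theorem eventually_expSum_pos {n : ℕ} {c θ : Fin (n + 1) → ℝ} (hθ : StrictMono θ)
    (hc : 0 < c (Fin.last n)) : ∀ᶠ t in atTop, 0 < ∑ j, c j * Real.exp (t * θ j) := by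
  have key : Tendsto (fun t : ℝ => ∑ j, c j * Real.exp (t * (θ j - θ (Fin.last n)))) atTop
      (𝓝 (∑ j, c j * if j = Fin.last n then 1 else 0)) := by
    refine tendsto_finsetSum _ fun j _ => Tendsto.const_mul _ ?_
    split_ifs with hj
    · simp [hj]
    · have : θ j - θ (Fin.last n) < 0 := sub_neg.2 (hθ (Fin.lt_last_iff_ne_last.2 hj))
      exact Real.tendsto_exp_atBot.comp (tendsto_id.atTop_mul_const_of_neg this)
  have hpos : 0 < ∑ j, c j * if j = Fin.last n then (1 : ℝ) else 0 := by simpa using hc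
  filter_upwards [key.eventually (lt_mem_nhds hpos)] with t ht
  have : ∑ j, c j * Real.exp (t * θ j) =
      (∑ j, c j * Real.exp (t * (θ j - θ (Fin.last n)))) * Real.exp (t * θ (Fin.last n)) := by
    rw [Finset.sum_mul]
    refine Finset.sum_congr rfl fun j _ => ?_
    rw [mul_assoc, ← Real.exp_add]
    ring_nf
  rw [this]
  exact mul_pos ht (Real.exp_pos _)

theorem det_exp_pos : ∀ (n : ℕ) (s θ : Fin n → ℝ), StrictMono s → StrictMono θ →
    0 < (Matrix.of fun i j => Real.exp (s i * θ j)).det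
  | 0, _, _, _, _ => by simp
  | n + 1, s, θ, hs, hθ => by
    -- the cofactors along the last row, which do not involve the last node
    let c : Fin (n + 1) → ℝ := fun j => (-1) ^ (n + (j : ℕ)) *
      (Matrix.of fun (i l : Fin n) => Real.exp (s i.castSucc * θ (j.succAbove l))).det
    have hD : ∀ t, (Matrix.of fun i j =>
        Real.exp ((Fin.snoc (fun i : Fin n => s i.castSucc) t : Fin (n + 1) → ℝ) i * θ j)).det =
          ∑ j, c j * Real.exp (t * θ j) := by
      intro t
      rw [Matrix.det_succ_row _ (Fin.last n)]
      refine Finset.sum_congr rfl fun j _ => ?_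
      have : (Matrix.of fun i j => Real.exp
          ((Fin.snoc (fun i : Fin n => s i.castSucc) t : Fin (n + 1) → ℝ) i * θ j)).submatrix
            (Fin.last n).succAbove j.succAbove =
          Matrix.of fun (i l : Fin n) => Real.exp (s i.castSucc * θ (j.succAbove l)) := by
        ext i l
        simp
      rw [this]
      simp only [c, Matrix.of_apply, Fin.snoc_last, Fin.val_last]
      ring
    have hne : ∀ t, s (Fin.last n) ≤ t → ∑ j, c j * Real.exp (t * θ j) ≠ 0 := by
      intro t ht
      rw [← hD]
      refine det_exp_ne_zero ?_ hθ
      intro a b hab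
      induction b using Fin.lastCases with
      | last =>
        obtain ⟨a, rfl⟩ := Fin.exists_castSucc_eq.2 hab.ne
        simpa using (hs hab).trans_le ht
      | cast b =>
        obtain ⟨a, rfl⟩ := Fin.exists_castSucc_eq.2 (hab.trans (Fin.castSucc_lt_last b)).ne
        simpa using hs hab
    have hc : 0 < c (Fin.last n) := by
      have := det_exp_pos n (fun i => s i.castSucc) (fun i => θ i.castSucc)
        (fun a b h => hs (Fin.castSucc_lt_castSucc_iff.2 h))
        (fun a b h => hθ (Fin.castSucc_lt_castSucc_iff.2 h))
      simpa [c, ← two_mul] using this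
    have hs' : (Fin.snoc (fun i : Fin n => s i.castSucc) (s (Fin.last n)) : Fin (n + 1) → ℝ) = s :=
      Fin.snoc_init_self s
    have h := hD (s (Fin.last n))
    rw [hs'] at h
    rw [h]
    by_contra hle
    obtain ⟨T, hT, hsT⟩ := ((eventually_expSum_pos hθ hc).and
      (Filter.eventually_ge_atTop (s (Fin.last n)))).exists
    obtain ⟨t, ht, ht0⟩ := intermediate_value_Icc hsT
      (f := fun t => ∑ j, c j * Real.exp (t * θ j)) (by fun_prop) ⟨not_lt.1 hle, hT.le⟩
    exact hne t ht.1 ht0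

/-- Strict total positivity of the kernel `K(x,y) = exp(xy)`: for strictly increasing
`s₀ < ⋯ < s_k` and `θ₀ < ⋯ < θ_k`, the matrix `B*` with entries `exp(sᵢ θⱼ)` has
strictly positive determinant. -/
theorem stmt16 (k : ℕ) (s θ : Fin (k + 1) → ℝ) (hs : StrictMono s) (hθ : StrictMono θ) :
    0 < (Matrix.of fun i j => Real.exp (s i * θ j)).det := by
  exact det_exp_pos (k + 1) s θ hs hθ
end
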